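/- Let A ∈ ℝ^{n×n}, let 1 ≤ r < n be an integer, and let B ∈ ℝ^{n×n} with rank(B) ≤ r satisfy ‖A − B‖_F² ≤ (1 + 1/(n−r))·min{‖A − X‖_F² : X ∈ ℝ^{n×n}, rank(X) ≤ r}. Then ‖A − B‖² ≤ 2·σ_{r+1}(A)², where ‖·‖ is the spectral norm. -/

import Mathlib

/-! The argument uses no singular value decomposition. Write `C = A - B`, `n - r = m + 1` and let
`E` be the least squared Frobenius error in rank `≤ r`. If `Q` has `m + 1` orthonormal columns,
then `A - A Q Qᵀ` has rank `≤ r` and squared error `‖A Q‖_F²`, so `E ≤ ‖A Q‖_F²`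
(`sInf_frobSq_le`). Fix any `X` of rank `≤ r` and put `t = ‖A - X‖`.

* If the columns of `Q` lie in `ker X`, then `A Q = (A - X) Q`, hence `E ≤ (m + 1) t²`.
* Given a unit vector `v`, choose `m` orthonormal vectors `K` in `ker B ∩ v^⊥`, and a unit vector
  `w` in `ker X` orthogonal to them. With `Q = [K, w]` this gives
  `E ≤ ‖A w‖² + ‖A K‖_F² ≤ t² + ‖C K‖_F² ≤ t² + ‖C‖_F² - ‖C v‖²`,
  the last step because `[v, K]` has orthonormal columns.

With `‖C‖_F² ≤ E + E / (m + 1)` these give `‖C v‖² ≤ 2 t²`; it remains to take the supremum over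
`v` and the infimum over `X`. -/

open MeasureTheory ProbabilityTheory Matrix
open scoped ENNReal Classical

noncomputable section

/-- Squared Euclidean norm of a finitely-indexed real vector. -/
def sqNorm {ι : Type*} [Fintype ι] (x : ι → ℝ) : ℝ := ∑ i, x i ^ 2

/-- Squared Frobenius norm of a real matrix. -/
def frobSq {m n : Type*} [Fintype m] [Fintype n] (A : Matrix m n ℝ) : ℝ :=
  ∑ i, ∑ j, A i j ^ 2

/-- Spectral (ℓ₂ operator) norm of a real matrix. -/
def specNorm {m n : Type*} [Fintype m] [Fintype n] (A : Matrix m n ℝ) : ℝ :=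
  sSup ((fun x : n → ℝ => Real.sqrt (sqNorm (A.mulVec x))) '' {x | sqNorm x ≤ 1})

/-- `i`-th largest singular value (1-based), characterized via
`σ_i(A) = min {‖A − X‖ : rank X ≤ i − 1}`. -/
def singVal {m n : Type*} [Fintype m] [Fintype n] (A : Matrix m n ℝ) (i : ℕ) : ℝ :=
  sInf {c | ∃ X : Matrix m n ℝ, X.rank ≤ i - 1 ∧ c = specNorm (A - X)}

/-- Flattening of an `n × n` matrix into a vector in `ℝ^{n²}`. -/
def vec (n : ℕ) (A : Matrix (Fin n) (Fin n) ℝ) : Fin (n * n) → ℝ :=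
  fun i => A (finProdFinEquiv.symm i).1 (finProdFinEquiv.symm i).2

/-- `u ⊗ v = vec (u vᵀ) ∈ ℝ^{n²}`. -/
def tensor {n : ℕ} (u v : Fin n → ℝ) : Fin (n * n) → ℝ :=
  vec n (Matrix.of fun i j => u i * v j)

/-- Standard Gaussian measure on `ι → ℝ`. -/
def stdGaussian (ι : Type*) [Fintype ι] : Measure (ι → ℝ) :=
  Measure.pi fun _ => gaussianReal 0 1

/-- Standard Gaussian measure on `n × n` matrices (as `Fin n → Fin n → ℝ`). -/
def stdGaussianMat (n : ℕ) : Measure (Fin n → Fin n → ℝ) :=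
  Measure.pi fun _ => stdGaussian (Fin n)

/-- Query maps of a deterministic `t`-round adaptive algorithm making `k` linear
measurements per round on inputs in `ℝ^N`. -/
def QueryMaps (N k t : ℕ) : Type :=
  (j : Fin t) → (Fin (j : ℕ) → (Fin k → ℝ)) → Matrix (Fin k) (Fin N) ℝ

namespace QueryMaps

variable {N k t : ℕ}

/-- Restriction of a round-`j` history to the first `i` rounds. -/
def prefixHist {j : Fin t} (h : Fin (j : ℕ) → Fin k → ℝ) {i : Fin t}
    (hij : (i : ℕ) < (j : ℕ)) : Fin (i : ℕ) → Fin k → ℝ :=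
  fun l => h ⟨l.1, l.isLt.trans hij⟩

/-- Validity of query maps: measurability, orthonormal rows within each round, and
orthogonality across rounds along consistent histories. -/
def Valid (Q : QueryMaps N k t) : Prop :=
  (∀ (j : Fin t) (i : Fin k) (l : Fin N), Measurable fun h => Q j h i l) ∧
  (∀ (j : Fin t) (h : Fin (j : ℕ) → Fin k → ℝ), Q j h * (Q j h)ᵀ = 1) ∧
  (∀ (j i : Fin t) (hij : (i : ℕ) < (j : ℕ)) (h : Fin (j : ℕ) → Fin k → ℝ),
      Q j h * (Q i (prefixHist h hij))ᵀ = 0)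

/-- Responses of the algorithm under exact linear measurements of `a`. -/
def resp (Q : QueryMaps N k t) (a : Fin N → ℝ) (j : Fin t) : Fin k → ℝ :=
  (Q j fun i => resp Q a ⟨i.1, i.isLt.trans j.isLt⟩).mulVec a
termination_by (j : ℕ)
decreasing_by exact i.isLt

/-- Responses of the algorithm under noisy linear measurements of `a`, with fresh
per-round noise `g`. -/
def nresp (Q : QueryMaps N k t) (a : Fin N → ℝ) (g : Fin t → Fin k → ℝ) (j : Fin t) :
    Fin k → ℝ :=
  ((Q j fun i => nresp Q a g ⟨i.1, i.isLt.trans j.isLt⟩).mulVec a) + g j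
termination_by (j : ℕ)
decreasing_by exact i.isLt

/-- The `tk × N` matrix stacking all the query matrices realized along the run of the
algorithm on input `a` (exact measurements). -/
def runMat (Q : QueryMaps N k t) (a : Fin N → ℝ) : Matrix (Fin t × Fin k) (Fin N) ℝ :=
  Matrix.of fun p l =>
    Q p.1 (fun i => resp Q a ⟨i.1, i.isLt.trans p.1.isLt⟩) p.2 l

end QueryMaps

/-- Kullback–Leibler divergence, valued in `[0, ∞]`, defined with the natural
logarithm. -/
def klDiv {Ω : Type*} [MeasurableSpace Ω] (P Q : Measure Ω) : ℝ≥0∞ :=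
  if P ≪ Q ∧ Integrable (fun x => Real.log ((P.rnDeriv Q x).toReal)) P then
    ENNReal.ofReal (∫ x, Real.log ((P.rnDeriv Q x).toReal) ∂P)
  else ⊤


/-- The rank-`r` plant `Σ_{i=1}^r uᵢ vᵢᵀ` built from the rows of `U` and `V`. -/
def plant {n r : ℕ} (U V : Fin r → Fin n → ℝ) : Matrix (Fin n) (Fin n) ℝ :=
  Matrix.of fun i j => ∑ l, U l i * V l j

/-- Schatten-`p` norm (real `p`), via the singular values. -/
def schattenNorm {n : ℕ} (p : ℝ) (A : Matrix (Fin n) (Fin n) ℝ) : ℝ :=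
  (∑ i ∈ Finset.range n, singVal A (i + 1) ^ p) ^ (1 / p)

/-- Ky-Fan `p` norm: sum of the `p` largest singular values. -/
def kyFanNorm {n : ℕ} (p : ℕ) (A : Matrix (Fin n) (Fin n) ℝ) : ℝ :=
  ∑ i ∈ Finset.range p, singVal A (i + 1)

lemma sqNorm_nonneg {ι : Type*} [Fintype ι] (x : ι → ℝ) : 0 ≤ sqNorm x :=
  Finset.sum_nonneg fun _ _ => sq_nonneg _

lemma sqNorm_smul {ι : Type*} [Fintype ι] (a : ℝ) (x : ι → ℝ) :
    sqNorm (a • x) = a ^ 2 * sqNorm x := by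
  simp only [sqNorm, Finset.mul_sum, Pi.smul_apply, smul_eq_mul, mul_pow]

lemma frobSq_nonneg {m n : Type*} [Fintype m] [Fintype n] (A : Matrix m n ℝ) : 0 ≤ frobSq A :=
  Finset.sum_nonneg fun _ _ => Finset.sum_nonneg fun _ _ => sq_nonneg _

lemma frobSq_eq_trace {m n : Type*} [Fintype m] [Fintype n] (A : Matrix m n ℝ) :
    frobSq A = (A * Aᵀ).trace := by
  simp [frobSq, Matrix.trace, Matrix.mul_apply, sq]

lemma sqNorm_mulVec_le {m n : Type*} [Fintype m] [Fintype n] (A : Matrix m n ℝ) (x : n → ℝ) :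
    sqNorm (A *ᵥ x) ≤ frobSq A * sqNorm x := by
  unfold sqNorm frobSq
  rw [Finset.sum_mul]
  exact Finset.sum_le_sum fun i _ => Finset.sum_mul_sq_le_sq_mul_sq _ _ _

lemma specNorm_nonneg {m n : Type*} [Fintype m] [Fintype n] (A : Matrix m n ℝ) :
    0 ≤ specNorm A := by
  apply Real.sSup_nonneg
  rintro _ ⟨x, _, rfl⟩
  exact Real.sqrt_nonneg _

lemma sqNorm_mulVec_le_specNorm {m n : Type*} [Fintype m] [Fintype n] (A : Matrix m n ℝ)
    (x : n → ℝ) (hx : sqNorm x ≤ 1) : sqNorm (A *ᵥ x) ≤ specNorm A ^ 2 := by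
  have hb : BddAbove ((fun x : n → ℝ => √(sqNorm (A *ᵥ x))) '' {x | sqNorm x ≤ 1}) := by
    refine ⟨√(frobSq A), ?_⟩
    rintro _ ⟨y, hy, rfl⟩
    exact Real.sqrt_le_sqrt ((sqNorm_mulVec_le A y).trans
      (mul_le_of_le_one_right (frobSq_nonneg A) hy))
  have h1 : √(sqNorm (A *ᵥ x)) ≤ specNorm A := le_csSup hb ⟨x, hx, rfl⟩
  exact (Real.sqrt_le_left (specNorm_nonneg A)).1 h1

lemma specNorm_le {m n : Type*} [Fintype m] [Fintype n] (A : Matrix m n ℝ) {c : ℝ}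
    (h : ∀ x, sqNorm x ≤ 1 → sqNorm (A *ᵥ x) ≤ c) : specNorm A ≤ √c := by
  apply csSup_le
  · exact ⟨_, 0, by simp [sqNorm], rfl⟩
  · rintro _ ⟨x, hx, rfl⟩
    exact Real.sqrt_le_sqrt (h x hx)

lemma frobSq_eq_sum_sqNorm {m n k : Type*} [Fintype m] [Fintype n] [Fintype k]
    (A : Matrix m n ℝ) (Q : Matrix n k ℝ) :
    frobSq (A * Q) = ∑ j, sqNorm (A *ᵥ Q.col j) := by
  rw [frobSq, Finset.sum_comm]
  rfl

/-- Pythagoras for the Frobenius norm, with respect to the projection `Q Qᵀ`. -/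
lemma frobSq_sub_proj {m n k : Type*} [Fintype m] [Fintype n] [Fintype k] [DecidableEq k]
    (A : Matrix m n ℝ) (Q : Matrix n k ℝ) (hQ : Qᵀ * Q = 1) :
    frobSq (A - A * Q * Qᵀ) = frobSq A - frobSq (A * Q) := by
  have h1 : A * Q * (Qᵀ * Q) * (A * Q)ᵀ = A * Q * (A * Q)ᵀ := by rw [hQ, Matrix.mul_one]
  simp only [frobSq_eq_trace]
  rw [← Matrix.trace_sub]
  congr 1
  simp only [Matrix.transpose_sub, Matrix.transpose_mul, Matrix.transpose_transpose,
    Matrix.mul_sub, Matrix.sub_mul, Matrix.mul_assoc] at h1 ⊢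
  rw [h1]
  abel

lemma frobSq_mul_le {m n k : Type*} [Fintype m] [Fintype n] [Fintype k] [DecidableEq k]
    (A : Matrix m n ℝ) (Q : Matrix n k ℝ) (hQ : Qᵀ * Q = 1) : frobSq (A * Q) ≤ frobSq A := by
  have h1 := frobSq_nonneg (A - A * Q * Qᵀ)
  rw [frobSq_sub_proj A Q hQ] at h1
  linarith

lemma frobSq_mul_transpose {m n k : Type*} [Fintype m] [Fintype n] [Fintype k] [DecidableEq k]
    (G : Matrix m k ℝ) (Q : Matrix n k ℝ) (hQ : Qᵀ * Q = 1) : frobSq (G * Qᵀ) = frobSq G := by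
  have h1 : G * (Qᵀ * Q) * Gᵀ = G * Gᵀ := by rw [hQ, Matrix.mul_one]
  simp only [frobSq_eq_trace]
  congr 1
  simpa only [Matrix.transpose_mul, Matrix.transpose_transpose, Matrix.mul_assoc] using h1

/-- Projecting away `n - r` orthonormal columns `Q` yields the rank-`r` competitor
`A - A Q Qᵀ`, whose error is `‖A Q‖_F²`. -/
lemma sInf_frobSq_le {n r : ℕ} {k : Type*} [Fintype k] [DecidableEq k]
    (A : Matrix (Fin n) (Fin n) ℝ) (Q : Matrix (Fin n) k ℝ) (hQ : Qᵀ * Q = 1)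
    (hk : n ≤ r + Fintype.card k) :
    sInf {c | ∃ X : Matrix (Fin n) (Fin n) ℝ, X.rank ≤ r ∧ c = frobSq (A - X)} ≤
      frobSq (A * Q) := by
  apply csInf_le
  · refine ⟨0, ?_⟩
    rintro _ ⟨X, _, rfl⟩
    exact frobSq_nonneg _
  · refine ⟨A - A * Q * Qᵀ, ?_, ?_⟩
    · have h0 : (A - A * Q * Qᵀ) * Q = 0 := by
        rw [Matrix.sub_mul, Matrix.mul_assoc (A * Q), hQ, Matrix.mul_one, sub_self]
      have h1 := Matrix.rank_add_rank_le_card_of_mul_eq_zero h0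
      have h2 : Fintype.card k ≤ Q.rank := by
        have := Matrix.rank_mul_le_right Qᵀ Q
        rwa [hQ, Matrix.rank_one] at this
      rw [Fintype.card_fin] at h1
      omega
    · rw [sub_sub_cancel, frobSq_mul_transpose _ _ hQ]

/-- The kernel of a matrix of rank at most `n - m` contains `m` orthonormal vectors. -/
lemma exists_orthonormal_ker {n m : ℕ} {p : Type*} [Fintype p]
    (N : Matrix p (Fin n) ℝ) (h : N.rank + m ≤ n) :
    ∃ Q : Matrix (Fin n) (Fin m) ℝ, Qᵀ * Q = 1 ∧ N * Q = 0 := by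
  let f : EuclideanSpace ℝ (Fin n) →ₗ[ℝ] (p → ℝ) :=
    N.mulVecLin ∘ₗ (WithLp.linearEquiv 2 ℝ (Fin n → ℝ)).toLinearMap
  have hr : Module.finrank ℝ (LinearMap.range f) = N.rank := by
    rw [LinearMap.range_comp_of_range_eq_top _ (LinearEquiv.range _)]
    rfl
  have hf := LinearMap.finrank_range_add_finrank_ker f
  rw [hr, finrank_euclideanSpace_fin] at hf
  have hm : m ≤ Module.finrank ℝ (LinearMap.ker f) := by omega
  obtain ⟨b, hb, hbf⟩ : ∃ b : Fin m → EuclideanSpace ℝ (Fin n),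
      Orthonormal ℝ b ∧ ∀ j, f (b j) = 0 := by
    let c := stdOrthonormalBasis ℝ (LinearMap.ker f)
    refine ⟨fun j => c (Fin.castLE hm j), ?_, fun j => (c (Fin.castLE hm j)).2⟩
    exact (c.orthonormal.comp_linearIsometry (LinearMap.ker f).subtypeₗᵢ).comp _
      (Fin.castLE_injective hm)
  refine ⟨Matrix.of fun i j => b j i, ?_, ?_⟩
  · ext i j
    have hij := orthonormal_iff_ite.1 hb i j
    rw [PiLp.inner_apply] at hij
    rw [Matrix.one_apply, ← hij]
    simp only [Matrix.mul_apply, Matrix.transpose_apply, Matrix.of_apply]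
    exact Finset.sum_congr rfl fun l _ => mul_comm _ _
  · ext i j
    exact congrFun (hbf j) i

lemma rank_add_le_rank_add_rank {p n : Type*} [Fintype p] [Fintype n] (X Y : Matrix p n ℝ) :
    (X + Y).rank ≤ X.rank + Y.rank := by
  unfold Matrix.rank
  rw [Matrix.mulVecLin_add]
  refine (Submodule.finrank_mono ?_).trans (Submodule.finrank_add_le_finrank_add_finrank _ _)
  rintro _ ⟨x, rfl⟩
  exact Submodule.add_mem_sup ⟨x, rfl⟩ ⟨x, rfl⟩

lemma rank_fromRows_le {p q n : Type*} [Fintype p] [Fintype q] [Fintype n]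
    (X : Matrix p n ℝ) (Y : Matrix q n ℝ) : (Matrix.fromRows X Y).rank ≤ X.rank + Y.rank := by
  have h1 : Matrix.fromRows X Y =
      Matrix.fromRows (1 : Matrix p p ℝ) 0 * X + Matrix.fromRows 0 (1 : Matrix q q ℝ) * Y := by
    rw [Matrix.fromRows_mul, Matrix.fromRows_mul]
    ext (i | i) j <;> simp
  rw [h1]
  exact (rank_add_le_rank_add_rank _ _).trans
    (add_le_add (Matrix.rank_mul_le_right _ _) (Matrix.rank_mul_le_right _ _))

lemma fromCols_orthonormal {n k l : Type*} [Fintype n] [DecidableEq k] [DecidableEq l]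
    (P : Matrix n k ℝ) (Q : Matrix n l ℝ) (hP : Pᵀ * P = 1) (hQ : Qᵀ * Q = 1)
    (hPQ : Pᵀ * Q = 0) : (Matrix.fromCols P Q)ᵀ * Matrix.fromCols P Q = 1 := by
  have hQP : Qᵀ * P = 0 := by simpa using congrArg Matrix.transpose hPQ
  rw [Matrix.transpose_fromCols, Matrix.fromRows_mul_fromCols, hP, hQ, hPQ, hQP,
    Matrix.fromBlocks_one]

lemma frobSq_mul_fromCols {m n k l : Type*} [Fintype m] [Fintype n] [Fintype k] [Fintype l]
    (A : Matrix m n ℝ) (P : Matrix n k ℝ) (Q : Matrix n l ℝ) :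
    frobSq (A * Matrix.fromCols P Q) = frobSq (A * P) + frobSq (A * Q) := by
  rw [frobSq_eq_sum_sqNorm, frobSq_eq_sum_sqNorm, frobSq_eq_sum_sqNorm, Fintype.sum_sum_type]
  rfl

/-- Vectors in `ker X` see `A` as `A - X`, so each orthonormal one contributes at most
`‖A - X‖²`. -/
lemma frobSq_mul_le_of_ker {m n k : Type*} [Fintype m] [Fintype n] [Fintype k] [DecidableEq k]
    (A X : Matrix m n ℝ) (Q : Matrix n k ℝ) (hQ : Qᵀ * Q = 1) (hX : X * Q = 0) :
    frobSq (A * Q) ≤ Fintype.card k * specNorm (A - X) ^ 2 := by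
  have h1 : A * Q = (A - X) * Q := by rw [Matrix.sub_mul, hX, sub_zero]
  rw [h1, frobSq_eq_sum_sqNorm, ← nsmul_eq_mul, ← Finset.card_univ]
  refine Finset.sum_le_card_nsmul _ _ _ fun j _ => sqNorm_mulVec_le_specNorm _ _ (le_of_eq ?_)
  have h2 := congrFun (congrFun hQ j) j
  rw [Matrix.one_apply_eq] at h2
  rw [← h2]
  simp [sqNorm, Matrix.mul_apply, sq, Matrix.col]

/-- The comparison with a fixed competitor `X`, for `V` a single unit column. -/
lemma frobSq_mul_unit_le (n r : ℕ) (hrn : r < n)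
    (A B : Matrix (Fin n) (Fin n) ℝ) (hB : B.rank ≤ r)
    (h : frobSq (A - B) ≤ (1 + 1 / ((n : ℝ) - r)) *
        sInf {c | ∃ X : Matrix (Fin n) (Fin n) ℝ, X.rank ≤ r ∧ c = frobSq (A - X)})
    (X : Matrix (Fin n) (Fin n) ℝ) (hX : X.rank ≤ r)
    (V : Matrix (Fin n) (Fin 1) ℝ) (hV : Vᵀ * V = 1) :
    frobSq ((A - B) * V) ≤ 2 * specNorm (A - X) ^ 2 := by
  obtain ⟨m, rfl⟩ : ∃ m, n = r + (m + 1) := ⟨n - r - 1, by omega⟩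
  set e := sInf {c | ∃ X : Matrix (Fin (r + (m + 1))) (Fin (r + (m + 1))) ℝ,
    X.rank ≤ r ∧ c = frobSq (A - X)} with he
  have hr1 : e ≤ ((m : ℝ) + 1) * specNorm (A - X) ^ 2 := by
    obtain ⟨Q, hQ, hXQ⟩ := exists_orthonormal_ker (m := m + 1) X (by omega)
    have h1 := frobSq_mul_le_of_ker A X Q hQ hXQ
    have h2 : e ≤ _ := sInf_frobSq_le A Q hQ (by simp)
    simp only [Fintype.card_fin] at h1
    push_cast at h1
    exact h2.trans h1
  have hr2 : e ≤ specNorm (A - X) ^ 2 + frobSq (A - B) - frobSq ((A - B) * V) := by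
    obtain ⟨K, hK, hNK⟩ := exists_orthonormal_ker (m := m) (Matrix.fromRows B Vᵀ) (by
      have h1 := rank_fromRows_le B Vᵀ
      have h2 := Vᵀ.rank_le_card_height
      rw [Fintype.card_fin] at h2
      omega)
    rw [Matrix.fromRows_mul, ← Matrix.fromRows_zero, Matrix.fromRows_inj.eq_iff] at hNK
    obtain ⟨hBK, hVK⟩ := hNK
    obtain ⟨W, hW, hNW⟩ := exists_orthonormal_ker (m := 1) (Matrix.fromRows X Kᵀ) (by
      have h1 := rank_fromRows_le X Kᵀ
      have h2 := Kᵀ.rank_le_card_height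
      rw [Fintype.card_fin] at h2
      omega)
    rw [Matrix.fromRows_mul, ← Matrix.fromRows_zero, Matrix.fromRows_inj.eq_iff] at hNW
    obtain ⟨hXW, hKW⟩ := hNW
    have h1 : e ≤ _ := sInf_frobSq_le A (Matrix.fromCols K W)
      (fromCols_orthonormal K W hK hW hKW) (by simp)
    have h2 := frobSq_mul_le (A - B) (Matrix.fromCols V K)
      (fromCols_orthonormal V K hV hK hVK)
    have h3 := frobSq_mul_le_of_ker A X W hW hXW
    rw [frobSq_mul_fromCols] at h1 h2
    rw [Matrix.sub_mul A B K, hBK, sub_zero] at h2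
    simp only [Fintype.card_fin, Nat.cast_one, one_mul] at h3
    linarith
  have hm : (0 : ℝ) < (m : ℝ) + 1 := by positivity
  have hc : ((r + (m + 1) : ℕ) : ℝ) - r = (m : ℝ) + 1 := by push_cast; ring
  rw [hc] at h
  have h4 : 1 / ((m : ℝ) + 1) * e ≤ specNorm (A - X) ^ 2 := by
    rw [one_div, inv_mul_le_iff₀ hm]
    exact hr1
  linarith

/-- A `(1 + 1/(n−r))`-approximate Frobenius norm rank-`r` approximation is a
`√2`-approximate spectral norm approximation. -/
theorem frobenius_approx_implies_spectral (n r : ℕ) (hr : 1 ≤ r) (hrn : r < n)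
    (A B : Matrix (Fin n) (Fin n) ℝ) (hB : B.rank ≤ r)
    (h : frobSq (A - B) ≤ (1 + 1 / ((n : ℝ) - r)) *
        sInf {c | ∃ X : Matrix (Fin n) (Fin n) ℝ, X.rank ≤ r ∧ c = frobSq (A - X)}) :
    specNorm (A - B) ^ 2 ≤ 2 * singVal A (r + 1) ^ 2 := by
  have key : ∀ X : Matrix (Fin n) (Fin n) ℝ, X.rank ≤ r →
      specNorm (A - B) ≤ √2 * specNorm (A - X) := by
    intro X hX
    have h1 : specNorm (A - B) ≤ √(2 * specNorm (A - X) ^ 2) := by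
      refine specNorm_le _ fun x hx => ?_
      rcases (sqNorm_nonneg x).eq_or_lt with h0 | h0
      · have := sqNorm_mulVec_le (A - B) x
        rw [← h0, mul_zero] at this
        exact this.trans (by positivity)
      · have hs : √(sqNorm x) ^ 2 = sqNorm x := Real.sq_sqrt h0.le
        -- `V` is the single column `x / ‖x‖`
        let V : Matrix (Fin n) (Fin 1) ℝ := Matrix.of fun i _ => (√(sqNorm x))⁻¹ * x i
        have hV : Vᵀ * V = 1 := by
          ext i j
          rw [Subsingleton.elim i j, Matrix.one_apply_eq]
          have h4 : (Vᵀ * V) j j = sqNorm ((√(sqNorm x))⁻¹ • x) := by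
            simp only [V, Matrix.mul_apply, Matrix.transpose_apply, Matrix.of_apply]
            exact Finset.sum_congr rfl fun i _ => (sq _).symm
          rw [h4, sqNorm_smul, inv_pow, hs, inv_mul_cancel₀ h0.ne']
        have h2 := frobSq_mul_unit_le n r hrn A B hB h X hX V hV
        have h3 : frobSq ((A - B) * V) = (sqNorm x)⁻¹ * sqNorm ((A - B) *ᵥ x) := by
          have h4 : V.col 0 = (√(sqNorm x))⁻¹ • x := rfl
          rw [frobSq_eq_sum_sqNorm, Fin.sum_univ_one, h4, Matrix.mulVec_smul, sqNorm_smul,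
            inv_pow, hs]
        rw [h3, inv_mul_le_iff₀ h0] at h2
        exact h2.trans (mul_le_of_le_one_left (by positivity) hx)
    rwa [Real.sqrt_mul (by norm_num), Real.sqrt_sq (specNorm_nonneg _)] at h1
  have h2 : 0 < √(2 : ℝ) := by positivity
  have h3 : specNorm (A - B) / √2 ≤ singVal A (r + 1) := by
    apply le_csInf
    · exact ⟨_, B, by simpa using hB, rfl⟩
    · rintro _ ⟨X, hX, rfl⟩
      rw [div_le_iff₀' h2]
      exact key X (by simpa using hX)
  rw [div_le_iff₀' h2] at h3
  calc specNorm (A - B) ^ 2 ≤ (√2 * singVal A (r + 1)) ^ 2 :=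
        pow_le_pow_left₀ (specNorm_nonneg _) h3 2
    _ = 2 * singVal A (r + 1) ^ 2 := by rw [mul_pow, Real.sq_sqrt (by norm_num)]

end
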